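/- arXiv:1911.11016 — 2 statements merged into one kernel-verified Lean document; each statement's English description precedes it below -/
import Mathlib

section
/- Let n ≥ 1 be an integer, let t > 0 and set q = e^{−t}. Then the Rips magnitude function of the cycle graph C_n satisfies |tC_n|_Rips = Σ_r (n/r)·q^{(n/r)·((r−1)/2)}·(1 − q) + q^{⌊n/2⌋}, where the sum is over all odd divisors r of n with r ≠ n. -/
open scoped BigOperators Real

/-- The Rips magnitude function of a finite subset `A` of a metric space:
`|tA|_Rips = Σ_{∅ ≠ B ⊆ A} (−1)^{#B−1} e^{−diam(B)·t}`. -/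
noncomputable def ripsMag {Y : Type*} [MetricSpace Y] (A : Finset Y) (t : ℝ) : ℝ :=
  ∑ B ∈ A.powerset.filter (fun B => B.Nonempty),
    (-1 : ℝ) ^ (B.card - 1) * Real.exp (-(Metric.diam (B : Set Y)) * t)


open scoped Classical in
/-- The vertex set of the cycle graph `C_n`, realised as the `n` points
`0, 1, …, n−1` in `ℝ/nℤ`; the induced metric is the shortest-path metric
`d(i,j) = min(|i−j|, n−|i−j|)`. -/
noncomputable def cycleGraph (n : ℕ) : Finset (AddCircle (n : ℝ)) :=
  (Finset.range n).image (fun j => ((j : ℝ) : AddCircle (n : ℝ)))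

/-!
Since `q ^ d = ∑ d ≤ k < h, q ^ k * (1 - q) + q ^ h`, the magnitude is a combination of the Euler
characteristics of the Vietoris–Rips complexes `{B | diam B ≤ k}` of `ℤ/n`, `k < n / 2`.

A set of diameter at most `k` has no two members differing by `k + 1, …, n - k - 1`, so if it
contains `a` but not `a - k`, then it may be toggled at `a + 1`. Doing this at a place `a` that
the toggling itself does not alter (a *pivot*) is a sign-reversing involution. The sets without
pivots are invariant under translation by `-k`, hence by `n - 2 * k = -2 * k`; among those of
diameter at most `k` there are then only the residue classes modulo `n - 2 * k`, and these require
`n - 2 * k ∣ k`, which says that `k = (n / r) * ((r - 1) / 2)` for an odd divisor `r` of `n`.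
-/

section AlternatingSums

variable {α R : Type*}

open scoped symmDiff

lemma neg_one_pow_card_symmDiff_singleton [DecidableEq α] [Ring R] (B : Finset α) (a : α) :
    (-1 : R) ^ (B ∆ {a}).card = -(-1) ^ B.card := by
  by_cases ha : a ∈ B
  · rw [symmDiff_of_ge (Finset.singleton_subset_iff.2 ha), Finset.sdiff_singleton_eq_erase,
      ← Finset.card_erase_add_one ha, pow_succ, mul_neg_one, neg_neg]
  · rw [(Finset.disjoint_singleton_right.2 ha).symmDiff_eq_sup, Finset.sup_eq_union,
      Finset.union_singleton, Finset.card_insert_of_notMem ha, pow_succ, mul_neg_one]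

lemma sum_neg_one_pow_card_eq_zero_of_symmDiff_mem [DecidableEq α] [Ring R]
    {𝒜 : Finset (Finset α)} (t : Finset α → α) (hmem : ∀ B ∈ 𝒜, B ∆ {t B} ∈ 𝒜)
    (ht : ∀ B ∈ 𝒜, t (B ∆ {t B}) = t B) :
    ∑ B ∈ 𝒜, (-1 : R) ^ (B.card + 1) = 0 := by
  refine Finset.sum_involution (fun B _ => B ∆ {t B}) ?_ ?_ hmem ?_
  · intro B _
    rw [pow_succ, pow_succ, neg_one_pow_card_symmDiff_singleton, neg_mul, add_neg_cancel]
  · intro B _ _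
    simp
  · intro B hB
    simp only [ht B hB, symmDiff_symmDiff_cancel_right]

lemma sum_nonempty_neg_one_pow_card [Fintype α] [Nonempty α] [Ring R] :
    ∑ B : Finset α with B.Nonempty, (-1 : R) ^ (B.card + 1) = 1 := by
  classical
  have hall : ∑ B : Finset α, (-1 : R) ^ (B.card + 1) = 0 :=
    sum_neg_one_pow_card_eq_zero_of_symmDiff_mem (fun _ => Classical.arbitrary α)
      (fun _ _ => Finset.mem_univ _) fun _ _ => rfl
  simp only [Finset.nonempty_iff_ne_empty, Finset.filter_ne']
  rw [Finset.sum_erase_eq_sub (Finset.mem_univ _), hall]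
  simp

lemma pow_eq_sum_range_filter_add_pow [CommRing R] (q : R) {d h : ℕ} (hd : d ≤ h) :
    q ^ d = ∑ k ∈ Finset.range h with d ≤ k, q ^ k * (1 - q) + q ^ h := by
  have hIco : {k ∈ Finset.range h | d ≤ k} = Finset.Ico d h := by
    ext k
    simp [and_comm]
  rw [hIco, ← Finset.sum_mul, geom_sum_Ico_mul_neg q hd, sub_add_cancel]

lemma sum_neg_one_pow_card_mul_pow [Fintype α] [Nonempty α] [CommRing R] (d : Finset α → ℕ)
    {h : ℕ} (hd : ∀ B, d B ≤ h) (q : R) :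
    ∑ B : Finset α with B.Nonempty, (-1) ^ (B.card + 1) * q ^ d B =
      ∑ k ∈ Finset.range h,
        (∑ B : Finset α with B.Nonempty ∧ d B ≤ k, (-1) ^ (B.card + 1)) * (q ^ k * (1 - q)) +
      q ^ h := by
  simp only [pow_eq_sum_range_filter_add_pow q (hd _), mul_add]
  rw [Finset.sum_add_distrib, ← Finset.sum_mul, sum_nonempty_neg_one_pow_card, one_mul]
  simp only [Finset.mul_sum, Finset.sum_mul]
  congr 1
  refine Finset.sum_comm' fun B k => ?_
  simp only [Finset.mem_filter, Finset.mem_univ, true_and]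
  tauto

end AlternatingSums

lemma ripsMag_image {X Y : Type*} [MetricSpace Y] [DecidableEq Y] {f : X → Y}
    (hf : Function.Injective f) (A : Finset X) (t : ℝ) :
    ripsMag (A.image f) t = ∑ B ∈ A.powerset with B.Nonempty,
      (-1) ^ (B.card - 1) * Real.exp (-Metric.diam (f '' B) * t) := by
  classical
  rw [ripsMag, Finset.powerset_image, Finset.filter_image,
    Finset.sum_image (Finset.image_injective hf).injOn]
  simp only [Finset.image_nonempty, Finset.card_image_of_injective _ hf, Finset.coe_image]

section Divisors

variable {n m k r : ℕ}

lemma dvd_of_add_two_mul_eq (hmk : m + 2 * k = n) (hd : m ∣ k) : m ∣ n :=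
  hmk ▸ (dvd_refl m).add (hd.mul_left 2)

lemma div_eq_two_mul_div_add_one (hmk : m + 2 * k = n) (hm : 0 < m) (hd : m ∣ k) :
    n / m = 2 * (k / m) + 1 := by
  rw [← hmk, Nat.add_div_left _ hm, Nat.mul_div_assoc 2 hd]

lemma sub_two_mul_div_mul_half (hr : r ∣ n) (hodd : Odd r) :
    n - 2 * (n / r * ((r - 1) / 2)) = n / r := by
  obtain ⟨l, rfl⟩ := hodd
  obtain ⟨d, rfl⟩ := hr
  rw [Nat.mul_div_cancel_left d (by omega), Nat.add_sub_cancel, Nat.mul_div_cancel_left l two_pos]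
  apply Nat.sub_eq_of_eq_add
  ring

lemma div_mul_half_lt_half (hn : n ≠ 0) (hr : r ∣ n) (hodd : Odd r) (hrn : r ≠ n) :
    n / r * ((r - 1) / 2) < n / 2 := by
  have hsub := sub_two_mul_div_mul_half hr hodd
  have hpos := Nat.div_pos (Nat.le_of_dvd (Nat.pos_of_ne_zero hn) hr) hodd.pos
  have hone : n / r ≠ 1 := fun h => hrn (Nat.eq_of_dvd_of_div_eq_one hr h)
  omega

lemma sum_range_half_filter_dvd {M : Type*} [AddCommMonoid M] (f : ℕ → ℕ → M) :
    ∑ k ∈ Finset.range (n / 2) with n - 2 * k ∣ k, f (n - 2 * k) k =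
      ∑ r ∈ n.divisors with Odd r ∧ r ≠ n, f (n / r) (n / r * ((r - 1) / 2)) := by
  symm
  refine Finset.sum_nbij' (fun r => n / r * ((r - 1) / 2)) (fun k => n / (n - 2 * k))
    (fun r hr => ?_) (fun k hk => ?_) (fun r hr => ?_) (fun k hk => ?_) (fun r hr => ?_)
  all_goals
    simp only [Finset.mem_filter, Finset.mem_range, Nat.mem_divisors] at *
  · obtain ⟨⟨hr, hn⟩, hodd, hrn⟩ := hr
    rw [sub_two_mul_div_mul_half hr hodd]
    exact ⟨div_mul_half_lt_half hn hr hodd hrn, dvd_mul_right _ _⟩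
  · obtain ⟨hk, hd⟩ := hk
    have hmk : n - 2 * k + 2 * k = n := by omega
    refine ⟨⟨Nat.div_dvd_of_dvd (dvd_of_add_two_mul_eq hmk hd), by omega⟩, ?_, ?_⟩
    · exact ⟨_, div_eq_two_mul_div_add_one hmk (by omega) hd⟩
    · exact (Nat.div_lt_self (by omega) (by omega)).ne
  · obtain ⟨⟨hr, hn⟩, hodd, -⟩ := hr
    rw [sub_two_mul_div_mul_half hr hodd, Nat.div_div_self hr hn]
  · obtain ⟨hk, hd⟩ := hk
    have hmk : n - 2 * k + 2 * k = n := by omega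
    rw [Nat.div_div_self (dvd_of_add_two_mul_eq hmk hd) (by omega),
      div_eq_two_mul_div_add_one hmk (by omega) hd, Nat.add_sub_cancel,
      Nat.mul_div_cancel_left _ two_pos, Nat.mul_div_cancel' hd]
  · rw [sub_two_mul_div_mul_half hr.1.1 hr.2.1]

end Divisors

/-- The diameter of a subset of `ℤ/n` for the shortest-path metric of the cycle graph;
`0` for the empty set. -/
def cyclicDiam {n : ℕ} (B : Finset (ZMod n)) : ℕ :=
  (B ×ˢ B).sup fun p => (p.1 - p.2).valMinAbs.natAbs

section CyclicDiam

variable {n k : ℕ} {B C : Finset (ZMod n)}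

lemma cyclicDiam_mono (h : B ⊆ C) : cyclicDiam B ≤ cyclicDiam C :=
  Finset.sup_mono (Finset.product_subset_product h h)

variable [NeZero n]

lemma cyclicDiam_le_half (B : Finset (ZMod n)) : cyclicDiam B ≤ n / 2 :=
  Finset.sup_le fun p _ => (p.1 - p.2).natAbs_valMinAbs_le

lemma cyclicDiam_le_iff :
    cyclicDiam B ≤ k ↔ ∀ a ∈ B, ∀ i : ℕ, k < i → i + k < n → a + i ∉ B := by
  simp only [cyclicDiam, Finset.sup_le_iff, Finset.mem_product, Prod.forall, and_imp,
    ZMod.valMinAbs_natAbs_eq_min]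
  constructor
  · intro h a ha i hki hin hai
    have hmin := h (a + i) a hai ha
    rw [add_sub_cancel_left, ZMod.val_natCast_of_lt (by omega)] at hmin
    omega
  · intro h b a hb ha
    by_contra! hlt
    refine h a ha (b - a).val (by omega) (by omega) ?_
    rwa [ZMod.natCast_zmod_val, add_sub_cancel]

lemma add_one_add_notMem_of_cyclicDiam_le (hk : k < n / 2) (hB : cyclicDiam B ≤ k) {a : ZMod n}
    (ha : a ∈ B) : a + 1 + k ∉ B := by
  have := cyclicDiam_le_iff.1 hB a ha (k + 1) (by omega) (by omega)
  rwa [Nat.cast_add, Nat.cast_one, add_comm (k : ZMod n), ← add_assoc] at this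

lemma sub_notMem_of_cyclicDiam_le (hk : k < n / 2) (hB : cyclicDiam B ≤ k) {a : ZMod n}
    (ha : a + 1 ∈ B) : a - k ∉ B := by
  intro h
  apply add_one_add_notMem_of_cyclicDiam_le hk hB h
  rwa [show a - k + 1 + k = a + 1 by ring]

lemma cyclicDiam_insert_add_one_le (hB : cyclicDiam B ≤ k) {a : ZMod n} (ha : a ∈ B)
    (hak : a - k ∉ B) : cyclicDiam (insert (a + 1) B) ≤ k := by
  rw [cyclicDiam_le_iff] at hB ⊢
  intro x hx i hki hin hy
  rcases Finset.mem_insert.1 hx with rfl | hxB <;> rcases Finset.mem_insert.1 hy with hxi | hyB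
  · have hdvd : n ∣ i := (ZMod.natCast_eq_zero_iff i n).1 (by simpa using hxi)
    exact absurd (Nat.le_of_dvd (by omega) hdvd) (by omega)
  · rw [show a + 1 + i = a + (i + 1 : ℕ) by push_cast; ring] at hyB
    rcases lt_or_ge (i + 1 + k) n with hlt | hge
    · exact hB a ha (i + 1) (by omega) hlt hyB
    · have hcast : ((i + 1 : ℕ) : ZMod n) = -k := by
        rw [eq_neg_iff_add_eq_zero, ← Nat.cast_add, show i + 1 + k = n by omega, ZMod.natCast_self]
      exact hak (by rwa [hcast, ← sub_eq_add_neg] at hyB)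
  · obtain ⟨j, rfl⟩ : ∃ j, i = j + 1 := ⟨i - 1, by omega⟩
    have hxj : x + j = a := by push_cast at hxi; linear_combination hxi
    rcases (Nat.lt_succ_iff.1 hki).lt_or_eq with hlt | rfl
    · exact hB x hxB j hlt (by omega) (by rwa [hxj])
    · exact hak (by rwa [← hxj, add_sub_cancel_right])
  · exact hB x hxB i hki hin hyB

end CyclicDiam

/-- The places at which the sign-reversing involution may toggle: `a` is a pivot of `B` if it
lies in `B` but not in the translate `B + k`, and if going down from `a` one meets `B + k` no later
than `B`. The last condition makes the set of pivots invariant under toggling `B` at `a + 1`. -/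
noncomputable def pivots {n : ℕ} [NeZero n] (k : ℕ) (B : Finset (ZMod n)) : Finset (ZMod n) :=
  open scoped Classical in
  {a ∈ B | a - k ∉ B ∧ ∃ i : ℕ, a - i - k ∈ B ∧ ∀ j : ℕ, 0 < j → j < i → a - j ∉ B}

section Pivots

variable {n k : ℕ} [NeZero n] {B : Finset (ZMod n)} {a : ZMod n}

lemma mem_pivots : a ∈ pivots k B ↔ a ∈ B ∧ a - k ∉ B ∧
    ∃ i : ℕ, a - i - k ∈ B ∧ ∀ j : ℕ, 0 < j → j < i → a - j ∉ B := by
  simp [pivots]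

lemma mem_pivots_of_mem_pivots_insert (hk : k < n / 2) (hC : cyclicDiam (insert (a + 1) B) ≤ k)
    (ha : a ∈ B) {x : ZMod n} (hx : x ∈ pivots k (insert (a + 1) B)) : x ∈ pivots k B := by
  have hak : a - k ∉ insert (a + 1) B :=
    sub_notMem_of_cyclicDiam_le hk hC (Finset.mem_insert_self _ _)
  have hak' : a + 1 + k ∉ insert (a + 1) B :=
    add_one_add_notMem_of_cyclicDiam_le hk hC (Finset.mem_insert_of_mem ha)
  obtain ⟨hxC, hxk, i, hi, hgap⟩ := mem_pivots.1 hx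
  have hxa : x ≠ a + 1 := by
    rintro rfl
    rcases i with _ | _ | i
    · exact hxk (by simpa using hi)
    · exact hak (by simpa using hi)
    · exact hgap 1 one_pos (by omega) (by simp [ha])
  refine mem_pivots.2 ⟨Finset.mem_of_mem_insert_of_ne hxC hxa,
    fun h => hxk (Finset.mem_insert_of_mem h), ?_⟩
  rcases Finset.mem_insert.1 hi with hia | hiB
  · refine ⟨i + 1, ?_, fun j hj hji hmem => ?_⟩
    · rwa [show x - (i + 1 : ℕ) - k = a by push_cast; linear_combination hia]
    · rcases (Nat.lt_succ_iff.1 hji).lt_or_eq with hlt | rfl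
      · exact hgap j hj hlt (Finset.mem_insert_of_mem hmem)
      · rw [show x - j = a + 1 + k by linear_combination hia] at hmem
        exact hak' (Finset.mem_insert_of_mem hmem)
  · exact ⟨i, hiB, fun j hj hji h => hgap j hj hji (Finset.mem_insert_of_mem h)⟩

lemma mem_pivots_insert_of_mem_pivots (hk : k < n / 2) (hC : cyclicDiam (insert (a + 1) B) ≤ k)
    (ha : a ∈ B) {x : ZMod n} (hx : x ∈ pivots k B) : x ∈ pivots k (insert (a + 1) B) := by
  have hak : a - k ∉ insert (a + 1) B :=
    sub_notMem_of_cyclicDiam_le hk hC (Finset.mem_insert_self _ _)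
  have hak' : a + 1 + k ∉ insert (a + 1) B :=
    add_one_add_notMem_of_cyclicDiam_le hk hC (Finset.mem_insert_of_mem ha)
  obtain ⟨hxB, hxk, i, hi, hgap⟩ := mem_pivots.1 hx
  refine mem_pivots.2 ⟨Finset.mem_insert_of_mem hxB, ?_, i, Finset.mem_insert_of_mem hi, ?_⟩
  · rw [Finset.mem_insert, not_or]
    refine ⟨fun h => hak' ?_, hxk⟩
    rw [show a + 1 + k = x by linear_combination -h]
    exact Finset.mem_insert_of_mem hxB
  · intro j hj hji
    rw [Finset.mem_insert, not_or]
    refine ⟨fun h => ?_, hgap j hj hji⟩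
    have hja : x - (j + 1 : ℕ) = a := by push_cast; linear_combination h
    rcases (Nat.succ_le_of_lt hji).lt_or_eq with hlt | rfl
    · exact hgap (j + 1) j.succ_pos hlt (by rwa [hja])
    · rw [Nat.succ_eq_add_one, hja] at hi
      exact hak (Finset.mem_insert_of_mem hi)

lemma pivots_insert_add_one (hk : k < n / 2) (hC : cyclicDiam (insert (a + 1) B) ≤ k)
    (ha : a ∈ B) : pivots k (insert (a + 1) B) = pivots k B :=
  Finset.Subset.antisymm (fun _ => mem_pivots_of_mem_pivots_insert hk hC ha)
    fun _ => mem_pivots_insert_of_mem_pivots hk hC ha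

open scoped symmDiff in
lemma cyclicDiam_symmDiff_le_and_pivots_symmDiff (hk : k < n / 2) (hB : cyclicDiam B ≤ k)
    (ha : a ∈ pivots k B) :
    cyclicDiam (B ∆ {a + 1}) ≤ k ∧ pivots k (B ∆ {a + 1}) = pivots k B := by
  obtain ⟨haB, hak, -⟩ := mem_pivots.1 ha
  have : Fact (1 < n) := ⟨by omega⟩
  by_cases h : a + 1 ∈ B
  · rw [symmDiff_of_ge (Finset.singleton_subset_iff.2 h), Finset.sdiff_singleton_eq_erase]
    have haE : a ∈ B.erase (a + 1) := Finset.mem_erase.2 ⟨by simp, haB⟩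
    have hins : insert (a + 1) (B.erase (a + 1)) = B := Finset.insert_erase h
    refine ⟨(cyclicDiam_mono (Finset.erase_subset _ _)).trans hB, ?_⟩
    rw [← pivots_insert_add_one hk (hins.symm ▸ hB) haE, hins]
  · rw [(Finset.disjoint_singleton_right.2 h).symmDiff_eq_sup, Finset.sup_eq_union,
      Finset.union_singleton]
    have hC := cyclicDiam_insert_add_one_le hB haB hak
    exact ⟨hC, pivots_insert_add_one hk hC haB⟩

lemma pivots_nonempty_of_sub_notMem (ha : a ∈ B) (hak : a - k ∉ B) : (pivots k B).Nonempty := by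
  classical
  have hex : ∃ i : ℕ, a - i - k ∈ B := ⟨(-k : ZMod n).val, by simpa using ha⟩
  let P : ℕ → Prop := fun j => a - j ∈ B
  set i := Nat.find hex
  have hi : 0 < i := (Nat.find_pos hex).2 (by simpa using hak)
  set j := Nat.findGreatest P (i - 1)
  have hj : a - j ∈ B := Nat.findGreatest_spec (P := P) (i - 1).zero_le (by simpa [P] using ha)
  have hji : j ≤ i - 1 := Nat.findGreatest_le _
  have hjk : a - j - k ∉ B := Nat.find_min hex (by omega)
  refine ⟨a - j, mem_pivots.2 ⟨hj, hjk, i - j, ?_, fun l hl hli => ?_⟩⟩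
  · rw [Nat.cast_sub (by omega), sub_sub a, add_sub_cancel]
    exact Nat.find_spec hex
  · have := Nat.findGreatest_is_greatest (P := P) (show j < j + l by omega) (by omega)
    rwa [sub_sub, ← Nat.cast_add]

lemma pivots_eq_empty_iff : pivots k B = ∅ ↔ ∀ a ∈ B, a - k ∈ B := by
  constructor
  · intro h a ha
    by_contra hak
    exact (pivots_nonempty_of_sub_notMem ha hak).ne_empty h
  · intro h
    refine Finset.eq_empty_of_forall_notMem fun a ha => ?_
    obtain ⟨haB, hak, -⟩ := mem_pivots.1 ha
    exact hak (h a haB)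

theorem sum_cyclicDiam_le_eq_sum_pivots_eq_empty {R : Type*} [Ring R] (hk : k < n / 2) :
    ∑ B : Finset (ZMod n) with B.Nonempty ∧ cyclicDiam B ≤ k, (-1 : R) ^ (B.card + 1) =
      ∑ B : Finset (ZMod n) with (B.Nonempty ∧ cyclicDiam B ≤ k) ∧ pivots k B = ∅,
        (-1) ^ (B.card + 1) := by
  choose! pick hpick using fun (P : Finset (ZMod n)) (hP : P.Nonempty) => hP
  have htoggle (B : Finset (ZMod n)) (hB : cyclicDiam B ≤ k) (hne : pivots k B ≠ ∅) :=
    cyclicDiam_symmDiff_le_and_pivots_symmDiff hk hB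
      (hpick _ (Finset.nonempty_iff_ne_empty.2 hne))
  rw [← Finset.sum_filter_add_sum_filter_not _ (fun B => pivots k B = ∅), Finset.filter_filter,
    Finset.filter_filter, add_eq_left]
  refine sum_neg_one_pow_card_eq_zero_of_symmDiff_mem (fun B => pick (pivots k B) + 1)
    (fun B hB => ?_) fun B hB => ?_
  · obtain ⟨⟨-, hdiam⟩, hne⟩ := (Finset.mem_filter_univ _).1 hB
    obtain ⟨hdiam', hpivots⟩ := htoggle B hdiam hne
    have hmem := hpick _ (Finset.nonempty_iff_ne_empty.2 hne)
    rw [Finset.mem_filter_univ, hpivots]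
    rw [← hpivots] at hmem
    exact ⟨⟨⟨_, (mem_pivots.1 hmem).1⟩, hdiam'⟩, hne⟩
  · obtain ⟨⟨-, hdiam⟩, hne⟩ := (Finset.mem_filter_univ _).1 hB
    rw [(htoggle B hdiam hne).2]

end Pivots

/-- The set of residues modulo `n` that reduce to `j` modulo a divisor `m` of `n`. -/
def residueClass {n m : ℕ} [NeZero n] (h : m ∣ n) (j : ZMod m) : Finset (ZMod n) :=
  {a | ZMod.castHom h (ZMod m) a = j}

section ResidueClass

variable {n m : ℕ} [NeZero n] (h : m ∣ n)

@[simp]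
lemma mem_residueClass {j : ZMod m} {a : ZMod n} :
    a ∈ residueClass h j ↔ ZMod.castHom h (ZMod m) a = j := by
  rw [residueClass, Finset.mem_filter_univ]

lemma residueClass_nonempty (j : ZMod m) : (residueClass h j).Nonempty :=
  (ZMod.castHom_surjective h j).imp fun _ => (mem_residueClass h).2

lemma residueClass_injective : Function.Injective (residueClass (n := n) h) := by
  intro i j hij
  obtain ⟨a, ha⟩ := residueClass_nonempty h i
  have ha' := hij ▸ ha
  rw [mem_residueClass] at ha ha'
  exact ha.symm.trans ha'

lemma card_residueClass (j : ZMod m) : (residueClass h j).card = n / m := by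
  have : NeZero m := ⟨ne_zero_of_dvd_ne_zero (NeZero.ne n) h⟩
  have hsum : ∑ i : ZMod m, (residueClass h i).card = n := by
    simp only [residueClass]
    rw [← Finset.card_eq_sum_card_fiberwise (fun _ _ => Finset.mem_coe.2 (Finset.mem_univ _)),
      Finset.card_univ, ZMod.card]
  have hfiber : ∀ i : ZMod m, (residueClass h i).card = (residueClass h j).card := fun i =>
    AddMonoidHom.card_fiber_eq_of_mem_range (ZMod.castHom h (ZMod m))
      (ZMod.castHom_surjective h i) (ZMod.castHom_surjective h j)
  rw [Finset.sum_congr rfl fun i _ => hfiber i, Finset.sum_const, Finset.card_univ, ZMod.card,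
    smul_eq_mul] at hsum
  exact (Nat.div_eq_of_eq_mul_right (NeZero.pos m) hsum.symm).symm

lemma castHom_eq_castHom_iff_dvd_val_sub {a b : ZMod n} :
    ZMod.castHom h (ZMod m) a = ZMod.castHom h (ZMod m) b ↔ m ∣ (a - b).val := by
  rw [← sub_eq_zero, ← map_sub, ← ZMod.natCast_zmod_val (a - b), map_natCast,
    ZMod.natCast_eq_zero_iff, ZMod.natCast_zmod_val]

end ResidueClass

section EulerCharacteristic

variable {n m k : ℕ} {B : Finset (ZMod n)}

lemma add_mul_mem_of_sub_mem (hmk : m + 2 * k = n) (hsub : ∀ a ∈ B, a - k ∈ B) {a : ZMod n}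
    (ha : a ∈ B) (i : ℕ) : a + (m * i : ℕ) ∈ B := by
  have hm : (m : ZMod n) + 2 * k = 0 := by
    simpa using congrArg (Nat.cast : ℕ → ZMod n) hmk
  induction i with
  | zero => simpa using ha
  | succ i ih =>
    convert hsub _ (hsub _ ih) using 1
    push_cast
    linear_combination hm

variable [NeZero n]

lemma dvd_val_sub_of_cyclicDiam_le (hmk : m + 2 * k = n) (hm : 0 < m) (hB : cyclicDiam B ≤ k)
    (hsub : ∀ a ∈ B, a - k ∈ B) {a b : ZMod n} (ha : a ∈ B) (hb : b ∈ B) : m ∣ (b - a).val := by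
  set v := (b - a).val
  by_contra hdvd
  have hmod : 0 < v % m := Nat.pos_of_ne_zero (mt Nat.dvd_of_mod_eq_zero hdvd)
  have hlt := Nat.mod_lt v hm
  have ha' := hsub _ (add_mul_mem_of_sub_mem hmk hsub ha (v / m))
  have hb' : a + (m * (v / m) : ℕ) - k + (k + v % m : ℕ) = b := by
    have hv : ((v % m + m * (v / m) : ℕ) : ZMod n) = b - a := by
      rw [Nat.mod_add_div, ZMod.natCast_zmod_val]
    push_cast at hv ⊢
    linear_combination hv
  exact cyclicDiam_le_iff.1 hB _ ha' (k + v % m)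
    (Nat.lt_add_of_pos_right hmod) (by omega) (hb'.symm ▸ hb)

lemma dvd_of_cyclicDiam_le (hmk : m + 2 * k = n) (hm : 0 < m) (hB : cyclicDiam B ≤ k)
    (hsub : ∀ a ∈ B, a - k ∈ B) (hne : B.Nonempty) : m ∣ k := by
  obtain ⟨a, ha⟩ := hne
  have hdvd := dvd_val_sub_of_cyclicDiam_le hmk hm hB hsub (hsub a ha) ha
  rwa [sub_sub_cancel, ZMod.val_natCast_of_lt (by omega)] at hdvd

lemma eq_residueClass_of_cyclicDiam_le (h : m ∣ n) (hmk : m + 2 * k = n) (hm : 0 < m)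
    (hB : cyclicDiam B ≤ k) (hsub : ∀ a ∈ B, a - k ∈ B) {a : ZMod n} (ha : a ∈ B) :
    B = residueClass h (ZMod.castHom h (ZMod m) a) := by
  ext b
  rw [mem_residueClass, castHom_eq_castHom_iff_dvd_val_sub]
  refine ⟨dvd_val_sub_of_cyclicDiam_le hmk hm hB hsub ha, fun ⟨i, hi⟩ => ?_⟩
  have hb := add_mul_mem_of_sub_mem hmk hsub ha i
  rwa [← hi, ZMod.natCast_zmod_val, add_sub_cancel] at hb

lemma cyclicDiam_residueClass_le (h : m ∣ n) (hmk : m + 2 * k = n) (hd : m ∣ k) (j : ZMod m) :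
    cyclicDiam (residueClass h j) ≤ k := by
  refine cyclicDiam_le_iff.2 fun a ha i hki hin hai => ?_
  rw [mem_residueClass] at ha hai
  rw [map_add, ha, add_eq_left, map_natCast, ZMod.natCast_eq_zero_iff] at hai
  have := Nat.le_of_dvd (by omega) (Nat.dvd_sub hai hd)
  omega

lemma sub_mem_residueClass (h : m ∣ n) (hd : m ∣ k) {j : ZMod m} {a : ZMod n}
    (ha : a ∈ residueClass h j) : a - k ∈ residueClass h j := by
  rw [mem_residueClass] at ha ⊢
  rw [map_sub, ha, map_natCast, (ZMod.natCast_eq_zero_iff k m).2 hd, sub_zero]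

lemma cyclicDiam_le_and_pivots_eq_empty_iff (h : m ∣ n) (hmk : m + 2 * k = n) (hm : 0 < m)
    (hd : m ∣ k) :
    (B.Nonempty ∧ cyclicDiam B ≤ k) ∧ pivots k B = ∅ ↔ ∃ j, residueClass h j = B := by
  rw [pivots_eq_empty_iff]
  constructor
  · rintro ⟨⟨⟨a, ha⟩, hB⟩, hsub⟩
    exact ⟨_, (eq_residueClass_of_cyclicDiam_le h hmk hm hB hsub ha).symm⟩
  · rintro ⟨j, rfl⟩
    exact ⟨⟨residueClass_nonempty h j, cyclicDiam_residueClass_le h hmk hd j⟩,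
      fun a => sub_mem_residueClass h hd⟩

lemma sum_pivots_eq_empty_of_dvd {R : Type*} [Ring R] (hmk : m + 2 * k = n) (hm : 0 < m)
    (hd : m ∣ k) :
    ∑ B : Finset (ZMod n) with (B.Nonempty ∧ cyclicDiam B ≤ k) ∧ pivots k B = ∅,
      (-1 : R) ^ (B.card + 1) = m := by
  have : NeZero m := ⟨hm.ne'⟩
  have h : m ∣ n := dvd_of_add_two_mul_eq hmk hd
  have hodd : Odd (n / m) := ⟨_, div_eq_two_mul_div_add_one hmk hm hd⟩
  have himage : ({B | (B.Nonempty ∧ cyclicDiam B ≤ k) ∧ pivots k B = ∅} : Finset _) =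
      Finset.univ.image (residueClass h) := by
    ext B
    simp [cyclicDiam_le_and_pivots_eq_empty_iff h hmk hm hd]
  rw [himage, Finset.sum_image (residueClass_injective h).injOn]
  simp [card_residueClass, hodd.add_one.neg_one_pow]

theorem sum_neg_one_pow_card_cyclicDiam_le {R : Type*} [Ring R] (hk : k < n / 2) :
    ∑ B : Finset (ZMod n) with B.Nonempty ∧ cyclicDiam B ≤ k, (-1 : R) ^ (B.card + 1) =
      if n - 2 * k ∣ k then ((n - 2 * k : ℕ) : R) else 0 := by
  have hmk : n - 2 * k + 2 * k = n := by omega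
  have hm : 0 < n - 2 * k := by omega
  rw [sum_cyclicDiam_le_eq_sum_pivots_eq_empty hk]
  split_ifs with hd
  · exact sum_pivots_eq_empty_of_dvd hmk hm hd
  · rw [Finset.filter_false_of_mem, Finset.sum_empty]
    rintro B - ⟨⟨hne, hB⟩, hpivots⟩
    exact hd (dvd_of_cyclicDiam_le hmk hm hB (pivots_eq_empty_iff.1 hpivots) hne)

end EulerCharacteristic

/-- The isometric inclusion of `ℤ/n` with the cyclic metric into the circle `ℝ/nℤ`. -/
noncomputable def zmodToAddCircle (n : ℕ) : ZMod n →+ AddCircle (n : ℝ) :=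
  ZMod.lift n ⟨(QuotientAddGroup.mk' _).comp (Int.castAddHom ℝ), by simp⟩

section Circle

variable {n : ℕ}

lemma zmodToAddCircle_intCast (z : ℤ) : zmodToAddCircle n z = ((z : ℝ) : AddCircle (n : ℝ)) :=
  ZMod.lift_coe ..

variable [NeZero n]

lemma dist_zmodToAddCircle (a b : ZMod n) :
    dist (zmodToAddCircle n a) (zmodToAddCircle n b) = (a - b).valMinAbs.natAbs := by
  have hle : |((a - b).valMinAbs : ℝ)| ≤ |(n : ℝ)| / 2 := by
    have := (a - b).natAbs_valMinAbs_le
    rw [Nat.abs_cast, ← Int.cast_abs, ← Nat.cast_natAbs, le_div_iff₀ two_pos]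
    exact_mod_cast by omega
  rw [dist_eq_norm, ← map_sub, ← ZMod.coe_valMinAbs (a - b), zmodToAddCircle_intCast,
    (AddCircle.norm_coe_eq_abs_iff _ (NeZero.ne _)).2 hle, ZMod.coe_valMinAbs, Nat.cast_natAbs,
    Int.cast_abs]

lemma zmodToAddCircle_injective : Function.Injective (zmodToAddCircle n) := by
  intro a b h
  rw [← dist_eq_zero, dist_zmodToAddCircle] at h
  simpa [sub_eq_zero] using h

open scoped Classical in
lemma cycleGraph_eq_image : cycleGraph n = Finset.univ.image (zmodToAddCircle n) := by
  have hcoe (j : ℕ) : ((j : ℝ) : AddCircle (n : ℝ)) = zmodToAddCircle n j := by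
    exact_mod_cast (zmodToAddCircle_intCast (j : ℤ)).symm
  ext x
  -- `cycleGraph` coerces `Finset.range n` to a `Finset ℝ` through the `Finset` monad.
  simp only [cycleGraph, Finset.mem_image, Finset.bind_def, Finset.pure_def, Finset.mem_sup,
    Finset.mem_range, Finset.mem_singleton, Finset.mem_univ, true_and]
  constructor
  · rintro ⟨_, ⟨j, -, rfl⟩, rfl⟩
    exact ⟨j, (hcoe j).symm⟩
  · rintro ⟨a, rfl⟩
    exact ⟨a.val, ⟨a.val, a.val_lt, rfl⟩, by rw [hcoe, ZMod.natCast_zmod_val]⟩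

lemma diam_image_zmodToAddCircle (B : Finset (ZMod n)) :
    Metric.diam (zmodToAddCircle n '' B) = cyclicDiam B := by
  apply le_antisymm
  · apply Metric.diam_le_of_forall_dist_le (Nat.cast_nonneg _)
    rintro _ ⟨a, ha, rfl⟩ _ ⟨b, hb, rfl⟩
    rw [dist_zmodToAddCircle, Nat.cast_le]
    exact Finset.le_sup (f := fun p : ZMod n × ZMod n => (p.1 - p.2).valMinAbs.natAbs)
      (Finset.mk_mem_product ha hb)
  · rcases B.eq_empty_or_nonempty with rfl | hB
    · simp [cyclicDiam]
    · obtain ⟨⟨a, b⟩, hab, hdiam⟩ := Finset.exists_mem_eq_sup _ (hB.product hB)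
        fun p : ZMod n × ZMod n => (p.1 - p.2).valMinAbs.natAbs
      obtain ⟨ha, hb⟩ := Finset.mem_product.1 hab
      rw [cyclicDiam, hdiam, ← dist_zmodToAddCircle]
      exact Metric.dist_le_diam_of_mem (B.finite_toSet.image _).isBounded
        (Set.mem_image_of_mem _ ha) (Set.mem_image_of_mem _ hb)

end Circle

lemma ripsMag_cycleGraph_eq_sum_cyclicDiam {n : ℕ} [NeZero n] (t : ℝ) :
    ripsMag (cycleGraph n) t =
      ∑ B : Finset (ZMod n) with B.Nonempty,
        (-1) ^ (B.card + 1) * Real.exp (-t) ^ cyclicDiam B := by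
  classical
  rw [cycleGraph_eq_image, ripsMag_image zmodToAddCircle_injective, Finset.powerset_univ]
  refine Finset.sum_congr rfl fun B hB => ?_
  have hsign : (-1 : ℝ) ^ (B.card - 1) = (-1) ^ (B.card + 1) := by
    have hcard := (Finset.mem_filter.1 hB).2.card_pos
    rw [show B.card + 1 = B.card - 1 + 2 by omega, pow_add, neg_one_sq, mul_one]
  rw [hsign, diam_image_zmodToAddCircle, ← Real.exp_nat_mul, neg_mul, mul_neg]

theorem ripsMag_cycleGraph_general {R : Type*} [CommRing R] (n : ℕ) [NeZero n] (q : R) :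
    ∑ B : Finset (ZMod n) with B.Nonempty, (-1) ^ (B.card + 1) * q ^ cyclicDiam B =
      (∑ r ∈ n.divisors with Odd r ∧ r ≠ n,
        ((n / r : ℕ) : R) * q ^ (n / r * ((r - 1) / 2)) * (1 - q)) + q ^ (n / 2) := by
  rw [sum_neg_one_pow_card_mul_pow cyclicDiam cyclicDiam_le_half,
    ← sum_range_half_filter_dvd fun d k => (d : R) * q ^ k * (1 - q), Finset.sum_filter]
  congr 1
  refine Finset.sum_congr rfl fun k hk => ?_
  rw [sum_neg_one_pow_card_cyclicDiam_le (Finset.mem_range.1 hk), ite_mul, zero_mul, mul_assoc]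

/-- for `n ≥ 1`, `t > 0` and `q = e^{−t}`,
`|tC_n|_Rips = Σ_{odd r ∣ n, r ≠ n} (n/r) q^{(n/r)((r−1)/2)} (1 − q) + q^{⌊n/2⌋}`. -/
theorem ripsMag_cycleGraph (n : ℕ) (hn : 1 ≤ n) (t : ℝ) (ht : 0 < t) :
    ripsMag (cycleGraph n) t =
      (∑ r ∈ n.divisors.filter (fun r => Odd r ∧ r ≠ n),
        ((n / r : ℕ) : ℝ) * Real.exp (-t) ^ ((n / r) * ((r - 1) / 2)) *
          (1 - Real.exp (-t)))
      + Real.exp (-t) ^ (n / 2) := by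
  have : NeZero n := ⟨by omega⟩
  rw [ripsMag_cycleGraph_eq_sum_cyclicDiam, ripsMag_cycleGraph_general]
end

section
/- Let n ≥ 1 be an integer and t > 0. Then the Rips magnitude function of the Euclidean cycle C_n^eucl satisfies |tC_n^eucl|_Rips = Σ_r (n/r)·(e^{−δ_r·t} − e^{−δ_{r,n}·t}) + e^{−δ_n·t}, where the sum is over all odd divisors r of n with r ≠ n. -/
open scoped BigOperators Real

/-- The Euclidean cycle `C_n^eucl`: `n` equally spaced points on the unit circle
in `ℝ² = ℂ`, with the Euclidean metric. -/
noncomputable def euclCycle (n : ℕ) : Finset ℂ :=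
  (Finset.range n).image
    (fun k : ℕ => Complex.exp (2 * (π : ℂ) * (k : ℂ) / (n : ℂ) * Complex.I))

/-- `δ_m = 2 sin(π ⌊m/2⌋ / m)`, the diameter of `C_m^eucl`. -/
noncomputable def deltaE (m : ℕ) : ℝ := 2 * Real.sin (π * ((m / 2 : ℕ) : ℝ) / (m : ℝ))

/-- `δ_{m,n} = 2 sin(π (1/n + ⌊m/2⌋/m))`. -/
noncomputable def deltaE2 (m n : ℕ) : ℝ :=
  2 * Real.sin (π * (1 / (n : ℝ) + ((m / 2 : ℕ) : ℝ) / (m : ℝ)))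

/-!
The diameter of a set `A` of vertices of the regular `n`-gon is an increasing function of the
largest number of steps, the shorter way round, between two elements of `A`. Summation by parts over
this number reduces `|tC_n^eucl|_Rips` to Euler characteristics: one has to count with signs, for
every `k` with `2 * k < n`, the cliques, that is, the nonempty sets whose elements are pairwise at
most `k` steps apart.

Call `a ∈ A` a tip if it is the farthest element at most `k` steps ahead of some element of `A`. For
a tip `a`, adding `a - k` to a clique `A` or removing it changes neither the clique property nor, as
long as `a - k` is not itself a tip, the set of tips. So only cliques closed under `a ↦ a - k`
contribute. They are the residue classes modulo `n - 2 * k`. These are cliques only if `n - 2 * k`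
divides `k`, that is, if `n - 2 * k = n / r` for an odd divisor `r` of `n`, and each of them then
has `r` elements.
-/

namespace CyclicClique

open Finset

section AlternatingSums

variable {R : Type*} [Ring R] {α : Type*}

lemma sum_neg_one_pow_card_eq_zero [DecidableEq α] {𝒜 : Finset (Finset α)} {v : α}
    (h : ∀ A, v ∉ A → (A ∈ 𝒜 ↔ insert v A ∈ 𝒜)) : ∑ A ∈ 𝒜, (-1 : R) ^ #A = 0 := by
  have hbij : ∑ A ∈ 𝒜 with v ∈ A, (-1 : R) ^ #A = ∑ A ∈ 𝒜 with v ∉ A, -(-1 : R) ^ #A := by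
    refine sum_nbij' (erase · v) (insert v) ?_ ?_ ?_ ?_ ?_
    · intro A hA
      obtain ⟨hA, hv⟩ := mem_filter.1 hA
      refine mem_filter.2 ⟨(h _ (notMem_erase v A)).2 ?_, notMem_erase v A⟩
      rwa [insert_erase hv]
    · intro A hA
      obtain ⟨hA, hv⟩ := mem_filter.1 hA
      exact mem_filter.2 ⟨(h A hv).1 hA, mem_insert_self v A⟩
    · exact fun A hA => insert_erase (mem_filter.1 hA).2
    · exact fun A hA => erase_insert (mem_filter.1 hA).2
    · intro A hA
      rw [← card_erase_add_one (mem_filter.1 hA).2, pow_succ, mul_neg_one]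
  rw [← sum_filter_add_sum_filter_not 𝒜 (v ∈ ·), hbij, sum_neg_distrib, neg_add_cancel]

lemma sum_nonempty_neg_one_pow_card [Fintype α] [Nonempty α] :
    ∑ A : Finset α with A.Nonempty, (-1 : R) ^ (#A + 1) = 1 := by
  classical
  have hall : ∑ A : Finset α, (-1 : R) ^ #A = 0 :=
    sum_neg_one_pow_card_eq_zero (v := Classical.arbitrary α) (by simp)
  have hempty : ({A : Finset α | ¬ A.Nonempty} : Finset (Finset α)) = {∅} := by ext; simp
  rw [← sum_filter_add_sum_filter_not univ Finset.Nonempty, hempty, sum_singleton, card_empty,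
    pow_zero] at hall
  simp only [pow_succ, mul_neg_one, sum_neg_distrib]
  rw [eq_neg_of_add_eq_zero_left hall, neg_neg]

end AlternatingSums

lemma sum_mul_apply_eq_sum_range {R ι : Type*} [Ring R] {s : Finset ι} (w : ι → R) {d : ι → ℕ}
    (f : ℕ → R) {N : ℕ} (hd : ∀ i ∈ s, d i ≤ N) :
    ∑ i ∈ s, w i * f (d i) =
      (∑ i ∈ s, w i) * f N +
        ∑ k ∈ range N, (∑ i ∈ s with d i ≤ k, w i) * (f k - f (k + 1)) := by
  have htele : ∀ i ∈ s, f (d i) = f N + ∑ k ∈ range N with d i ≤ k, (f k - f (k + 1)) := by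
    intro i hi
    have hIco : ({k ∈ range N | d i ≤ k} : Finset ℕ) = Ico (d i) N := by
      ext; simp [and_comm]
    rw [hIco, ← sub_eq_iff_eq_add', ← neg_sub, ← sum_Ico_sub f (hd i hi), ← sum_neg_distrib]
    simp only [neg_sub]
  rw [sum_congr rfl fun i hi => by rw [htele i hi, mul_add, mul_sum, sum_filter],
    sum_add_distrib, ← sum_mul, sum_comm]
  simp only [sum_mul, sum_filter, ite_mul, zero_mul]

section CyclicOrder

variable {n k : ℕ} {a b c v x : ZMod n} {A : Finset (ZMod n)}

/-- The number of unit steps that lead from `a` forward to `b` on the cycle `ZMod n`. -/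
def fwd (a b : ZMod n) : ℕ := (b - a).val

@[simp] lemma fwd_self (a : ZMod n) : fwd a a = 0 := by simp [fwd]

lemma fwd_eq_zero_iff : fwd a b = 0 ↔ a = b := by
  rw [fwd, ZMod.val_eq_zero, sub_eq_zero, eq_comm]

lemma fwd_pos_iff : 0 < fwd a b ↔ a ≠ b := by
  rw [Nat.pos_iff_ne_zero, ne_eq, fwd_eq_zero_iff]

lemma fwd_add_natCast (a : ZMod n) {j : ℕ} (hj : j < n) : fwd a (a + j) = j := by
  simp [fwd, ZMod.val_natCast_of_lt hj]

lemma fwd_sub_natCast (a : ZMod n) {j : ℕ} (hj : j < n) : fwd (a - (j : ZMod n)) a = j := by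
  simp [fwd, ZMod.val_natCast_of_lt hj]

/-- The vertex set `A` is a clique of the `k`-th power of the `n`-cycle: any two of its elements
are at most `k` steps apart, in one direction or the other. -/
def IsCyclicClique (k : ℕ) (A : Finset (ZMod n)) : Prop :=
  ∀ a ∈ A, ∀ b ∈ A, fwd a b ≤ k ∨ fwd b a ≤ k

instance : DecidablePred (IsCyclicClique k : Finset (ZMod n) → Prop) := fun A =>
  inferInstanceAs (Decidable (∀ a ∈ A, ∀ b ∈ A, fwd a b ≤ k ∨ fwd b a ≤ k))

lemma IsCyclicClique.subset {B : Finset (ZMod n)} (hA : IsCyclicClique k A) (h : B ⊆ A) :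
    IsCyclicClique k B :=
  fun a ha b hb => hA a (h ha) b (h hb)

/-- The point `a` is the element of `A` farthest ahead of `b` among those at most `k` forward steps
away; `b` itself need not lie in `A`. -/
def IsFarthest (k : ℕ) (A : Finset (ZMod n)) (b a : ZMod n) : Prop :=
  a ∈ A ∧ fwd b a ≤ k ∧ ∀ c ∈ A, fwd b c ≤ k → fwd b c ≤ fwd b a

instance (b : ZMod n) : DecidablePred (IsFarthest k A b) := fun a =>
  inferInstanceAs (Decidable (a ∈ A ∧ fwd b a ≤ k ∧ ∀ c ∈ A, fwd b c ≤ k → fwd b c ≤ fwd b a))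

lemma exists_isFarthest (k : ℕ) (hb : b ∈ A) : ∃ a, IsFarthest k A b a := by
  obtain ⟨a, ha, hmax⟩ := ({c ∈ A | fwd b c ≤ k} : Finset _).exists_max_image (fwd b)
    ⟨b, by simp [hb]⟩
  simp only [mem_filter] at ha hmax
  exact ⟨a, ha.1, ha.2, fun c hc h => hmax c ⟨hc, h⟩⟩

lemma isFarthest_of_fwd_eq (ha : a ∈ A) (hba : fwd b a = k) : IsFarthest k A b a :=
  ⟨ha, hba.le, fun _ _ h => h.trans hba.ge⟩

lemma isFarthest_insert_iff (h : fwd c v ≤ k → ∃ b ∈ A, fwd c b ≤ k ∧ fwd c v < fwd c b) :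
    IsFarthest k (insert v A) c x ↔ IsFarthest k A c x := by
  constructor
  · rintro ⟨hx, hcx, hmax⟩
    refine ⟨(mem_insert.1 hx).resolve_left ?_, hcx, fun d hd => hmax d (mem_insert_of_mem hd)⟩
    rintro rfl
    obtain ⟨b, hb, hcb, hlt⟩ := h hcx
    exact (hmax b (mem_insert_of_mem hb) hcb).not_gt hlt
  · rintro ⟨hx, hcx, hmax⟩
    refine ⟨mem_insert_of_mem hx, hcx, fun d hd hcd => ?_⟩
    rcases mem_insert.1 hd with rfl | hd
    · obtain ⟨b, hb, hcb, hlt⟩ := h hcd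
      exact hlt.le.trans (hmax b hb hcb)
    · exact hmax d hd hcd

/-- The elements of `A` that are farthest ahead of some element of `A`. -/
def tips (k : ℕ) (A : Finset (ZMod n)) : Finset (ZMod n) :=
  {a ∈ A | ∃ b ∈ A, IsFarthest k A b a}

lemma tips_subset (k : ℕ) (A : Finset (ZMod n)) : tips k A ⊆ A := filter_subset _ _

lemma mem_tips : a ∈ tips k A ↔ ∃ b ∈ A, IsFarthest k A b a := by
  simp only [tips, mem_filter, and_iff_right_iff_imp]
  exact fun ⟨_, _, h⟩ => h.1

/-- The set `A` is closed under the rotation of the cycle by `k` steps backwards. -/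
def IsShiftClosed (k : ℕ) (A : Finset (ZMod n)) : Prop :=
  ∀ a ∈ A, a - (k : ZMod n) ∈ A

instance : DecidablePred (IsShiftClosed k : Finset (ZMod n) → Prop) := fun A =>
  inferInstanceAs (Decidable (∀ a ∈ A, a - (k : ZMod n) ∈ A))

lemma IsShiftClosed.tips_eq_self (hk : k < n) (h : IsShiftClosed k A) : tips k A = A :=
  (tips_subset k A).antisymm fun a ha =>
    mem_tips.2 ⟨a - (k : ZMod n), h a ha, isFarthest_of_fwd_eq ha (fwd_sub_natCast a hk)⟩

lemma natCast_sub_two_mul (hk : 2 * k ≤ n) : ((n - 2 * k : ℕ) : ZMod n) = -2 * k := by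
  simp [Nat.cast_sub hk]

lemma sub_two_mul_dvd_self (hk : 2 * k ≤ n) (hd : n - 2 * k ∣ k) : n - 2 * k ∣ n :=
  (Nat.dvd_sub_iff_left hk (hd.mul_left 2)).1 dvd_rfl

lemma div_sub_two_mul (hk : 2 * k < n) (hd : n - 2 * k ∣ k) :
    n / (n - 2 * k) = 2 * (k / (n - 2 * k)) + 1 := by
  have hsum : n = (n - 2 * k) * (2 * (k / (n - 2 * k)) + 1) := by
    rw [mul_add, mul_left_comm, Nat.mul_div_cancel' hd]
    lia
  exact Nat.div_eq_of_eq_mul_right (by lia) hsum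

lemma half_div_sub_two_mul_mul (hk : 2 * k < n) (hd : n - 2 * k ∣ k) :
    n / (n - 2 * k) / 2 * (n - 2 * k) = k := by
  rw [div_sub_two_mul hk hd, Nat.mul_add_div two_pos, Nat.div_eq_of_lt one_lt_two, add_zero,
    Nat.div_mul_cancel hd]

variable [NeZero n]

lemma fwd_lt (a b : ZMod n) : fwd a b < n := ZMod.val_lt _

lemma add_natCast_fwd (a b : ZMod n) : a + (fwd a b : ℕ) = b := by simp [fwd]

lemma fwd_add_fwd_eq_or (a b c : ZMod n) :
    fwd a b + fwd b c = fwd a c ∨ fwd a b + fwd b c = fwd a c + n := by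
  have hmod : fwd a c = (fwd a b + fwd b c) % n := by
    rw [fwd, fwd, fwd, ← ZMod.val_add, sub_add_sub_cancel']
  have hab := fwd_lt a b
  have hbc := fwd_lt b c
  rcases lt_or_ge (fwd a b + fwd b c) n with hlt | hge
  · exact .inl (hmod.trans (Nat.mod_eq_of_lt hlt)).symm
  · rw [Nat.mod_eq_sub_mod hge, Nat.mod_eq_of_lt (by lia)] at hmod
    lia

lemma fwd_add_fwd_of_lt (h : fwd a b + fwd b c < n) : fwd a b + fwd b c = fwd a c := by
  have := fwd_add_fwd_eq_or a b c
  lia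

lemma fwd_add_fwd_of_le_left (h : fwd a b ≤ fwd a c) : fwd a b + fwd b c = fwd a c := by
  have := fwd_add_fwd_eq_or a b c
  have := fwd_lt b c
  lia

lemma fwd_add_fwd_of_le_right (h : fwd b c ≤ fwd a c) : fwd a b + fwd b c = fwd a c := by
  have := fwd_add_fwd_eq_or a b c
  have := fwd_lt a b
  lia

lemma fwd_add_fwd_swap (h : a ≠ b) : fwd a b + fwd b a = n := by
  have hsum := fwd_add_fwd_eq_or a b a
  have := fwd_pos_iff.2 h
  rw [fwd_self] at hsum
  lia

lemma eq_of_fwd_le_of_fwd_le (hk : 2 * k < n) (hab : fwd a b ≤ k) (hba : fwd b a ≤ k) :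
    a = b := by
  by_contra h
  have := fwd_add_fwd_swap h
  lia

lemma fwd_le_or_fwd_le_of_le_of_le (ha : fwd a c ≤ k) (hb : fwd b c ≤ k) :
    fwd a b ≤ k ∨ fwd b a ≤ k := by
  rcases le_total (fwd a c) (fwd b c) with h | h
  · right
    have := fwd_add_fwd_of_le_right h
    lia
  · left
    have := fwd_add_fwd_of_le_right h
    lia

lemma isCyclicClique_of_le (h : n ≤ 2 * k + 1) : IsCyclicClique k A := by
  intro a _ b _
  have := fwd_add_fwd_eq_or a b a
  rw [fwd_self] at this
  lia

lemma IsFarthest.eq_of_fwd_eq (hx : IsFarthest k A b x) (ha : a ∈ A) (hba : fwd b a = k) :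
    x = a := by
  have hbx : fwd b x = k := hx.2.1.antisymm (hba.ge.trans (hx.2.2 a ha hba.le))
  rw [← add_natCast_fwd b x, ← add_natCast_fwd b a, hbx, hba]

lemma IsFarthest.fwd_add_fwd (h : IsFarthest k A b a) (hva : fwd v a = k) :
    fwd v b + fwd b a = k := by
  rw [← hva]
  exact fwd_add_fwd_of_le_right (h.2.1.trans hva.ge)

lemma IsFarthest.fwd_add_fwd_le (h : IsFarthest k A b a) (hva : fwd v a = k) (hc : c ∈ A)
    (hbc : fwd b c ≤ k) : fwd v b + fwd b c ≤ k := by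
  rw [← h.fwd_add_fwd hva]
  exact Nat.add_le_add_left (h.2.2 c hc hbc) _

lemma IsFarthest.fwd_le (hk : 2 * k < n) (h : IsFarthest k A b a) (hva : fwd v a = k)
    (hc : c ∈ A) (hbc : fwd b c ≤ k) : fwd v c ≤ k := by
  have hle := h.fwd_add_fwd_le hva hc hbc
  rwa [fwd_add_fwd_of_lt (by lia)] at hle

lemma IsCyclicClique.insert_of_mem_tips (hk : 2 * k < n) (hA : IsCyclicClique k A)
    (ha : a ∈ tips k A) (hva : fwd v a = k) : IsCyclicClique k (insert v A) := by
  obtain ⟨b, hb, hba⟩ := mem_tips.1 ha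
  have hvb : fwd v b ≤ k := (Nat.le_add_right _ _).trans (hba.fwd_add_fwd hva).le
  have hadj : ∀ c ∈ A, fwd v c ≤ k ∨ fwd c v ≤ k := fun c hc => by
    rcases hA b hb c hc with hbc | hcb
    · exact .inl (hba.fwd_le hk hva hc hbc)
    · exact fwd_le_or_fwd_le_of_le_of_le hvb hcb
  simp only [IsCyclicClique, forall_mem_insert]
  exact ⟨⟨.inl (by simp), hadj⟩, fun c hc => ⟨(hadj c hc).symm, hA c hc⟩⟩

lemma IsCyclicClique.tips_insert (hk : 2 * k < n) (hA : IsCyclicClique k A)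
    (ha : a ∈ tips k A) (hva : fwd v a = k) (hv : v ∉ A) :
    tips k (insert v A) = tips k A := by
  obtain ⟨b, hb, hba⟩ := mem_tips.1 ha
  have hvb : fwd v b ≤ k := (Nat.le_add_right _ _).trans (hba.fwd_add_fwd hva).le
  have hdom : ∀ c ∈ A, fwd c v ≤ k → fwd c b ≤ k ∧ fwd c v < fwd c b := by
    intro c hc hcv
    have hcb : fwd c b ≤ k := by
      refine (hA b hb c hc).resolve_left fun hbc => hv ?_
      rwa [eq_of_fwd_le_of_fwd_le hk (hba.fwd_le hk hva hc hbc) hcv]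
    have hsum := fwd_add_fwd_of_lt (a := c) (b := v) (c := b) (by lia)
    have hpos : 0 < fwd v b := fwd_pos_iff.2 fun h => hv (h ▸ hb)
    exact ⟨hcb, by lia⟩
  have hiff : ∀ c ∈ A, ∀ x, IsFarthest k (insert v A) c x ↔ IsFarthest k A c x :=
    fun c hc x => isFarthest_insert_iff fun hcv => ⟨b, hb, hdom c hc hcv⟩
  ext x
  rw [mem_tips, mem_tips, exists_mem_insert]
  constructor
  · rintro (hx | ⟨c, hc, hx⟩)
    · rw [hx.eq_of_fwd_eq (mem_insert_of_mem hba.1) hva]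
      exact ⟨b, hb, hba⟩
    · exact ⟨c, hc, (hiff c hc x).1 hx⟩
  · rintro ⟨c, hc, hx⟩
    exact .inr ⟨c, hc, (hiff c hc x).2 hx⟩

lemma IsCyclicClique.mem_tips_of_notMem_tips_insert (hk : 2 * k < n)
    (hA : IsCyclicClique k (insert v A)) (ha : a ∈ A) (hva : fwd v a = k) (hv : v ∉ A)
    (hv' : v ∉ tips k (insert v A)) : a ∈ tips k A := by
  -- The element `b` of `A` that comes first after `v` has `a` as its farthest point.
  obtain ⟨b, hb, hfirst⟩ := A.exists_min_image (fwd v) ⟨a, ha⟩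
  have hvba : fwd v b + fwd b a = fwd v a := fwd_add_fwd_of_le_left (hfirst a ha)
  have hvb : 0 < fwd v b := fwd_pos_iff.2 fun h => hv (h ▸ hb)
  refine mem_tips.2 ⟨b, hb, ha, by lia, fun c hc hbc => ?_⟩
  by_contra! hlt
  have hvc : k < fwd v c := by
    have := fwd_add_fwd_of_lt (a := v) (b := b) (c := c) (by lia)
    lia
  have hcv : fwd c v ≤ k :=
    (hA v (mem_insert_self v A) c (mem_insert_of_mem hc)).resolve_left hvc.not_ge
  obtain ⟨d, hd, hcd, hvd⟩ : ∃ d ∈ insert v A, fwd c d ≤ k ∧ fwd c v < fwd c d := by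
    by_contra! h
    exact hv' (mem_tips.2 ⟨c, mem_insert_of_mem hc, mem_insert_self v A, hcv, h⟩)
  have hdA : d ∈ A := (mem_insert.1 hd).resolve_left (by rintro rfl; exact hvd.false)
  have hcvd : fwd c v + fwd v d = fwd c d := fwd_add_fwd_of_le_left hvd.le
  have hcb : fwd c b ≤ k := by
    have := hfirst d hdA
    have := fwd_add_fwd_of_lt (a := c) (b := v) (c := b) (by lia)
    lia
  obtain rfl := eq_of_fwd_le_of_fwd_le hk hbc hcb
  simp at hlt

lemma IsCyclicClique.tips_eq_self (hk : 2 * k < n) (hA : IsCyclicClique k A)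
    (h : IsShiftClosed k (tips k A)) : tips k A = A := by
  refine (tips_subset k A).antisymm fun b hb => ?_
  obtain ⟨a, hba⟩ := exists_isFarthest k hb
  have hva : fwd (a - (k : ZMod n)) a = k := fwd_sub_natCast a (by lia)
  have hv : a - (k : ZMod n) ∈ tips k A := h a (mem_tips.2 ⟨b, hb, hba⟩)
  generalize a - (k : ZMod n) = v at *
  suffices hvb : v = b by rwa [← hvb]
  obtain ⟨c, hc, hcv⟩ := mem_tips.1 hv
  by_contra hne
  have hsum := hba.fwd_add_fwd hva
  have hpos : 0 < fwd v b := fwd_pos_iff.2 hne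
  have hcvb := fwd_add_fwd_of_lt (a := c) (b := v) (c := b) (by have := hcv.2.1; lia)
  have hcb : ¬ fwd c b ≤ k := fun hle => by
    have := hcv.2.2 b hb hle
    lia
  have hbc : fwd b c ≤ k := (hA b hb c hc).resolve_right hcb
  obtain rfl := eq_of_fwd_le_of_fwd_le hk (hba.fwd_le hk hva hc hbc) hcv.2.1
  have := eq_of_fwd_le_of_fwd_le hk hbc (by lia)
  exact hne this.symm

lemma IsCyclicClique.isShiftClosed_tips_iff (hk : 2 * k < n) (hA : IsCyclicClique k A) :
    IsShiftClosed k (tips k A) ↔ IsShiftClosed k A := by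
  constructor <;> intro h
  · rwa [hA.tips_eq_self hk h] at h
  · rwa [h.tips_eq_self (by lia)]

/-- Cliques with the same tips cancel in pairs `A`, `insert (a - k) A`, where `a` is a tip such that
`a - k` is not a tip. -/
lemma sum_tips_eq_neg_one_pow_card_eq_zero {R : Type*} [Ring R] (hk : 2 * k < n)
    {E : Finset (ZMod n)} (hE : ¬ IsShiftClosed k E) :
    ∑ A : Finset (ZMod n) with (A.Nonempty ∧ IsCyclicClique k A) ∧ tips k A = E,
      (-1 : R) ^ #A = 0 := by
  obtain ⟨a, haE, hvE⟩ : ∃ a ∈ E, a - (k : ZMod n) ∉ E := by simpa [IsShiftClosed] using hE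
  have hva : fwd (a - (k : ZMod n)) a = k := fwd_sub_natCast a (by lia)
  generalize a - (k : ZMod n) = v at *
  refine sum_neg_one_pow_card_eq_zero (v := v) fun A hv => ?_
  simp only [mem_filter_univ]
  constructor
  · rintro ⟨⟨-, hA⟩, rfl⟩
    exact ⟨⟨insert_nonempty v A, hA.insert_of_mem_tips hk haE hva⟩, hA.tips_insert hk haE hva hv⟩
  · rintro ⟨⟨-, hA⟩, rfl⟩
    have hav : a ≠ v := fun h => hvE (h ▸ haE)
    have haA : a ∈ A := (mem_insert.1 (tips_subset _ _ haE)).resolve_left hav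
    have hA' : IsCyclicClique k A := hA.subset (subset_insert v A)
    have hat : a ∈ tips k A := hA.mem_tips_of_notMem_tips_insert hk haA hva hv hvE
    exact ⟨⟨⟨a, haA⟩, hA'⟩, (hA'.tips_insert hk hat hva hv).symm⟩

lemma sum_isCyclicClique_eq_sum_isShiftClosed {R : Type*} [Ring R] (hk : 2 * k < n) :
    ∑ A : Finset (ZMod n) with A.Nonempty ∧ IsCyclicClique k A, (-1 : R) ^ #A =
      ∑ A : Finset (ZMod n) with (A.Nonempty ∧ IsCyclicClique k A) ∧ IsShiftClosed k A,
        (-1 : R) ^ #A := by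
  have hopen : ∑ A : Finset (ZMod n) with
      (A.Nonempty ∧ IsCyclicClique k A) ∧ ¬ IsShiftClosed k A, (-1 : R) ^ #A = 0 := by
    rw [← sum_fiberwise _ (tips k)]
    refine sum_eq_zero fun E _ => ?_
    rw [filter_filter]
    by_cases hE : IsShiftClosed k E
    · refine sum_eq_zero fun A hmem => ?_
      obtain ⟨⟨⟨-, hA⟩, hclosed⟩, rfl⟩ := (mem_filter_univ _).1 hmem
      exact absurd ((hA.isShiftClosed_tips_iff hk).1 hE) hclosed
    · rw [← sum_tips_eq_neg_one_pow_card_eq_zero hk hE]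
      refine sum_congr (filter_congr fun A _ => ⟨fun h => ⟨h.1.1, h.2⟩, ?_⟩) fun _ _ => rfl
      rintro ⟨hA, rfl⟩
      exact ⟨⟨hA, (hA.2.isShiftClosed_tips_iff hk).not.1 hE⟩, rfl⟩
  rw [← sum_filter_add_sum_filter_not _ (IsShiftClosed k), filter_filter, filter_filter, hopen,
    add_zero]

lemma IsShiftClosed.add_mul_mem (h : IsShiftClosed k A) (ha : a ∈ A) (z : ZMod n) :
    a + z * k ∈ A := by
  have hsub : ∀ j : ℕ, a - j * k ∈ A := by
    intro j
    induction j with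
    | zero => simpa using ha
    | succ j ih =>
      convert h _ ih using 1
      push_cast
      ring
  simpa using hsub (-z).val

lemma IsCyclicClique.eq_of_fwd_lt (hk : 2 * k < n) (hA : IsCyclicClique k A)
    (h : IsShiftClosed k A) (ha : a ∈ A) (hx : x ∈ A) (hax : fwd a x < n - 2 * k) : a = x := by
  have hva : fwd (a - (k : ZMod n)) a = k := fwd_sub_natCast a (by lia)
  have hadj := hA _ (h a ha) x hx
  generalize a - (k : ZMod n) = v at *
  by_contra hne
  have hpos : 0 < fwd a x := fwd_pos_iff.2 hne
  have hvx : fwd v a + fwd a x = fwd v x := fwd_add_fwd_of_lt (by lia)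
  have hxv : fwd v x + fwd x v = n := fwd_add_fwd_swap (by rintro rfl; simp at hvx; lia)
  lia

lemma IsCyclicClique.mem_iff_dvd_fwd (hk : 2 * k < n) (hA : IsCyclicClique k A)
    (h : IsShiftClosed k A) (ha : a ∈ A) : x ∈ A ↔ n - 2 * k ∣ fwd a x := by
  set m := n - 2 * k with hm
  have hmul : ∀ j : ℕ, a + (m * j : ℕ) ∈ A := fun j => by
    convert h.add_mul_mem ha (-2 * j) using 2
    rw [Nat.cast_mul, hm, natCast_sub_two_mul hk.le]
    ring
  constructor
  · intro hx
    set y : ZMod n := a + (m * (fwd a x / m) : ℕ)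
    have hrem : fwd a x % m < m := Nat.mod_lt _ (by lia)
    have hxy : x = y + (fwd a x % m : ℕ) := by
      rw [add_assoc, ← Nat.cast_add, Nat.div_add_mod, add_natCast_fwd]
    have hyx : fwd y x = fwd a x % m := by
      conv_lhs => rw [hxy]
      exact fwd_add_natCast y (by lia)
    rw [Nat.dvd_iff_mod_eq_zero, ← hyx, fwd_eq_zero_iff]
    exact hA.eq_of_fwd_lt hk h (hmul _) hx (hyx ▸ hrem)
  · rintro ⟨j, hj⟩
    rw [← add_natCast_fwd a x, hj]
    exact hmul j

lemma IsCyclicClique.sub_two_mul_dvd (hk : 2 * k < n) (hA : IsCyclicClique k A)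
    (h : IsShiftClosed k A) (hne : A.Nonempty) : n - 2 * k ∣ k := by
  obtain ⟨a, ha⟩ := hne
  have hmem : a + k ∈ A := by simpa using h.add_mul_mem ha 1
  rwa [hA.mem_iff_dvd_fwd hk h ha, fwd_add_natCast a (by lia)] at hmem

/-- The residue class of `i` modulo `m` inside `ZMod n`, meaningful when `m` divides `n`. -/
def residueClass (n : ℕ) [NeZero n] {m : ℕ} (i : ZMod m) : Finset (ZMod n) :=
  {x | (x.cast : ZMod m) = i}

lemma mem_residueClass {m : ℕ} {i : ZMod m} : x ∈ residueClass n i ↔ (x.cast : ZMod m) = i := by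
  simp [residueClass]

lemma cast_eq_cast_iff_dvd_fwd {m : ℕ} (hm : m ∣ n) :
    (x.cast : ZMod m) = a.cast ↔ m ∣ fwd a x := by
  rw [← sub_eq_zero, ← ZMod.cast_sub hm, ← ZMod.natCast_val, ZMod.natCast_eq_zero_iff, fwd]

lemma residueClass_nonempty {m : ℕ} (hm : m ∣ n) (i : ZMod m) : (residueClass n i).Nonempty := by
  obtain ⟨x, hx⟩ := ZMod.castHom_surjective hm i
  exact ⟨x, mem_residueClass.2 hx⟩

lemma mul_card_residueClass {m : ℕ} (hm : m ∣ n) (i : ZMod m) : m * #(residueClass n i) = n := by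
  have : NeZero m := ⟨ne_zero_of_dvd_ne_zero (NeZero.ne n) hm⟩
  let φ := ZMod.castHom hm (ZMod m)
  have hcard : ∀ j, #(residueClass n j) = #(residueClass n i) := fun j =>
    AddMonoidHom.card_fiber_eq_of_mem_range φ.toAddMonoidHom
      (ZMod.castHom_surjective hm j) (ZMod.castHom_surjective hm i)
  calc m * #(residueClass n i) = ∑ j : ZMod m, #(residueClass n j) := by simp [hcard, ZMod.card]
    _ = #(univ : Finset (ZMod n)) := (card_eq_sum_card_fiberwise fun _ _ => mem_univ _).symm
    _ = n := by simp [ZMod.card]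

lemma odd_card_residueClass (hk : 2 * k < n) (hd : n - 2 * k ∣ k) (i : ZMod (n - 2 * k)) :
    Odd #(residueClass n i) := by
  have hcard : n / (n - 2 * k) = #(residueClass n i) := Nat.div_eq_of_eq_mul_right (by lia)
    (mul_card_residueClass (sub_two_mul_dvd_self hk.le hd) i).symm
  exact ⟨_, hcard ▸ div_sub_two_mul hk hd⟩

lemma isCyclicClique_residueClass (hk : 2 * k ≤ n) (hd : n - 2 * k ∣ k)
    (i : ZMod (n - 2 * k)) : IsCyclicClique k (residueClass n i) := by
  intro a ha b hb
  rw [mem_residueClass] at ha hb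
  have hab := (cast_eq_cast_iff_dvd_fwd (sub_two_mul_dvd_self hk hd)).1 (hb.trans ha.symm)
  by_contra! hlt
  have hsum := fwd_add_fwd_swap (a := a) (b := b) (by rintro rfl; simp at hlt)
  have := Nat.le_of_dvd (by lia) (Nat.dvd_sub hab hd)
  lia

lemma isShiftClosed_residueClass (hk : 2 * k ≤ n) (hd : n - 2 * k ∣ k)
    (i : ZMod (n - 2 * k)) : IsShiftClosed k (residueClass n i) := by
  intro a ha
  have hdn := sub_two_mul_dvd_self hk hd
  rw [mem_residueClass] at ha ⊢
  rw [ZMod.cast_sub hdn, ZMod.cast_natCast hdn, (ZMod.natCast_eq_zero_iff _ _).2 hd, sub_zero, ha]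

lemma isShiftClosed_isCyclicClique_iff (hk : 2 * k < n) (hd : n - 2 * k ∣ k) :
    (A.Nonempty ∧ IsCyclicClique k A) ∧ IsShiftClosed k A ↔
      ∃ i : ZMod (n - 2 * k), residueClass n i = A := by
  have hdn := sub_two_mul_dvd_self hk.le hd
  constructor
  · rintro ⟨⟨⟨a, ha⟩, hA⟩, h⟩
    refine ⟨a.cast, ?_⟩
    ext x
    rw [mem_residueClass, cast_eq_cast_iff_dvd_fwd hdn, hA.mem_iff_dvd_fwd hk h ha]
  · rintro ⟨i, rfl⟩
    exact ⟨⟨residueClass_nonempty hdn i, isCyclicClique_residueClass hk.le hd i⟩,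
      isShiftClosed_residueClass hk.le hd i⟩

lemma residueClass_injective {m : ℕ} (hm : m ∣ n) :
    Function.Injective (residueClass n : ZMod m → Finset (ZMod n)) := by
  intro i j hij
  obtain ⟨x, hx⟩ := residueClass_nonempty hm i
  exact (mem_residueClass.1 hx).symm.trans (mem_residueClass.1 (hij ▸ hx))

/-- The Euler characteristic of the clique complex of the `k`-th power of the `n`-cycle. -/
theorem sum_isCyclicClique_neg_one_pow {R : Type*} [Ring R] (hk : 2 * k < n) :
    ∑ A : Finset (ZMod n) with A.Nonempty ∧ IsCyclicClique k A, (-1 : R) ^ (#A + 1) =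
      if n - 2 * k ∣ k then ((n - 2 * k : ℕ) : R) else 0 := by
  simp only [pow_succ, mul_neg_one, sum_neg_distrib]
  rw [sum_isCyclicClique_eq_sum_isShiftClosed hk, ← sum_neg_distrib]
  split_ifs with hd
  · have : NeZero (n - 2 * k) := ⟨by lia⟩
    have himage : ({A : Finset (ZMod n) | (A.Nonempty ∧ IsCyclicClique k A) ∧
        IsShiftClosed k A} : Finset _) = univ.image (residueClass n : ZMod (n - 2 * k) → _) := by
      ext A
      simp [isShiftClosed_isCyclicClique_iff hk hd]
    rw [himage, sum_image (residueClass_injective (sub_two_mul_dvd_self hk.le hd)).injOn]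
    simp [(odd_card_residueClass hk hd _).neg_one_pow, ZMod.card]
  · refine sum_eq_zero fun A hmem => ?_
    obtain ⟨⟨hne, hA⟩, h⟩ := (mem_filter_univ _).1 hmem
    exact absurd (hA.sub_two_mul_dvd hk h hne) hd

end CyclicOrder

section Diameter

/-- The alternating sum `∑ (-1) ^ (#B + 1) * f (diam B)` over the nonempty subsets `B` of a finite
subset `A` of a metric space. The Rips magnitude at `t` is the case `f d = exp (-d * t)`. -/
noncomputable def ripsSum {R Y : Type*} [Ring R] [PseudoMetricSpace Y] (f : ℝ → R)
    (A : Finset Y) : R :=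
  ∑ B ∈ A.powerset with B.Nonempty, (-1 : R) ^ (#B + 1) * f (Metric.diam (B : Set Y))

lemma ripsMag_eq_ripsSum {Y : Type*} [MetricSpace Y] (A : Finset Y) (t : ℝ) :
    ripsMag A t = ripsSum (fun d => Real.exp (-d * t)) A := by
  refine sum_congr rfl fun B hB => ?_
  obtain ⟨j, hj⟩ := Nat.exists_eq_add_one.2 (card_pos.2 (mem_filter.1 hB).2)
  simp [hj, pow_succ]

lemma ripsSum_image_univ {R ι Y : Type*} [Ring R] [Fintype ι] [PseudoMetricSpace Y]
    [DecidableEq Y] (f : ℝ → R) {g : ι → Y} (hg : Function.Injective g) :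
    ripsSum f (univ.image g) =
      ∑ A : Finset ι with A.Nonempty, (-1 : R) ^ (#A + 1) * f (Metric.diam (g '' A)) := by
  classical
  symm
  refine sum_bij (fun A _ => A.image g) ?_ ?_ ?_ ?_
  · intro A hA
    rw [mem_filter, mem_powerset]
    exact ⟨image_subset_image (subset_univ A), ((mem_filter_univ _).1 hA).image g⟩
  · exact fun A _ B _ h => image_injective hg h
  · intro B hB
    rw [mem_filter, mem_powerset] at hB
    obtain ⟨A, -, rfl⟩ := subset_image_iff.1 hB.1
    exact ⟨A, (mem_filter_univ _).2 (image_nonempty.1 hB.2), rfl⟩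
  · intro A _
    rw [card_image_of_injective A hg, coe_image]

/-- The distance between vertices of the regular `n`-gon in the unit circle that are `j` steps
apart. -/
noncomputable def chord (n j : ℕ) : ℝ := 2 * Real.sin (π * j / n)

lemma chord_mono {n i j : ℕ} (hij : i ≤ j) (hj : j ≤ n / 2) : chord n i ≤ chord n j := by
  have hj' : (j : ℝ) / n ≤ 1 / 2 := by
    rcases n.eq_zero_or_pos with rfl | hn
    · simp
    · rw [div_le_div_iff₀ (by positivity) two_pos]
      exact_mod_cast (by lia : j * 2 ≤ 1 * n)
  refine mul_le_mul_of_nonneg_left (Real.sin_le_sin_of_le_of_le_pi_div_two ?_ ?_ ?_) zero_le_two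
  · linarith [Real.pi_pos, show 0 ≤ π * i / n by positivity]
  · rw [mul_div_assoc]
    linarith [mul_le_mul_of_nonneg_left hj' Real.pi_pos.le]
  · gcongr

variable {n : ℕ} {a b : ZMod n} {A : Finset (ZMod n)}

/-- The largest number of steps, in the shorter direction, between two elements of `A`. -/
def cyclicDiam (A : Finset (ZMod n)) : ℕ :=
  (A ×ˢ A).sup fun p => min (fwd p.1 p.2) (fwd p.2 p.1)

lemma cyclicDiam_le_iff {k : ℕ} : cyclicDiam A ≤ k ↔ IsCyclicClique k A := by
  simp only [cyclicDiam, Finset.sup_le_iff, mem_product, min_le_iff, Prod.forall, and_imp]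
  exact ⟨fun h a ha b hb => h a b ha hb, fun h a b ha hb => h a ha b hb⟩

lemma min_fwd_le_cyclicDiam (ha : a ∈ A) (hb : b ∈ A) :
    min (fwd a b) (fwd b a) ≤ cyclicDiam A :=
  min_le_iff.2 (cyclicDiam_le_iff.1 le_rfl a ha b hb)

lemma exists_min_fwd_eq_cyclicDiam (hA : A.Nonempty) :
    ∃ a ∈ A, ∃ b ∈ A, min (fwd a b) (fwd b a) = cyclicDiam A := by
  obtain ⟨⟨a, b⟩, hab, h⟩ := (A ×ˢ A).exists_mem_eq_sup (hA.product hA)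
    fun p => min (fwd p.1 p.2) (fwd p.2 p.1)
  rw [mem_product] at hab
  exact ⟨a, hab.1, b, hab.2, h.symm⟩

variable [NeZero n]

lemma cyclicDiam_le_half (A : Finset (ZMod n)) : cyclicDiam A ≤ n / 2 :=
  cyclicDiam_le_iff.2 (isCyclicClique_of_le (by lia))

lemma norm_stdAddChar_sub_one (a : ZMod n) : ‖ZMod.stdAddChar a - 1‖ = chord n a.val := by
  have hle : (a.val : ℝ) / n ≤ 1 :=
    div_le_one_of_le₀ (by exact_mod_cast (ZMod.val_lt a).le) (Nat.cast_nonneg n)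
  have hsin : 0 ≤ Real.sin (π * a.val / n) := by
    refine Real.sin_nonneg_of_nonneg_of_le_pi (by positivity) ?_
    rw [mul_div_assoc]
    exact mul_le_of_le_one_right Real.pi_pos.le hle
  have hexp : (ZMod.stdAddChar a : ℂ) =
      Complex.exp (Complex.I * ((2 * (π * a.val / n) : ℝ) : ℂ)) := by
    rw [ZMod.stdAddChar_apply, ZMod.toCircle_apply]
    push_cast
    ring_nf
  rw [hexp, Complex.norm_exp_I_mul_ofReal_sub_one, mul_div_cancel_left₀ _ two_ne_zero,
    Real.norm_eq_abs, abs_of_nonneg (by positivity), chord]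

lemma dist_stdAddChar (a b : ZMod n) :
    dist (ZMod.stdAddChar a) (ZMod.stdAddChar b) = chord n (fwd a b) := by
  have hb : (ZMod.stdAddChar b : ℂ) = ZMod.stdAddChar a * ZMod.stdAddChar (b - a) := by
    rw [← AddChar.map_add_eq_mul, add_sub_cancel]
  have hnorm : ‖(ZMod.stdAddChar a : ℂ)‖ = 1 := by
    rw [ZMod.stdAddChar_apply]
    exact Circle.norm_coe _
  rw [dist_comm, dist_eq_norm, hb, ← mul_sub_one, norm_mul, hnorm, one_mul,
    norm_stdAddChar_sub_one, fwd]

lemma dist_stdAddChar_eq_chord_min (a b : ZMod n) :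
    dist (ZMod.stdAddChar a) (ZMod.stdAddChar b) = chord n (min (fwd a b) (fwd b a)) := by
  rcases min_choice (fwd a b) (fwd b a) with h | h
  · rw [h, dist_stdAddChar]
  · rw [h, dist_comm, dist_stdAddChar]

lemma diam_image_stdAddChar (hA : A.Nonempty) :
    Metric.diam ((ZMod.stdAddChar : ZMod n → ℂ) '' A) = chord n (cyclicDiam A) := by
  obtain ⟨a, ha, b, hb, hab⟩ := exists_min_fwd_eq_cyclicDiam hA
  rw [← hab, ← dist_stdAddChar_eq_chord_min]
  refine le_antisymm (Metric.diam_le_of_forall_dist_le dist_nonneg ?_) ?_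
  · rintro _ ⟨x, hx, rfl⟩ _ ⟨y, hy, rfl⟩
    rw [dist_stdAddChar_eq_chord_min, dist_stdAddChar_eq_chord_min, hab]
    exact chord_mono (min_fwd_le_cyclicDiam hx hy) (cyclicDiam_le_half A)
  · exact Metric.dist_le_diam_of_mem (A.finite_toSet.image _).isBounded
      (Set.mem_image_of_mem _ ha) (Set.mem_image_of_mem _ hb)

lemma euclCycle_eq_image : euclCycle n = (univ : Finset (ZMod n)).image ZMod.stdAddChar := by
  have hexp (j : ℕ) : Complex.exp (2 * π * j / n * Complex.I) = ZMod.stdAddChar (j : ZMod n) := by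
    rw [ZMod.stdAddChar_apply, ZMod.toCircle_natCast]
    ring_nf
  ext z
  simp only [euclCycle, hexp, mem_image, mem_range, mem_univ, true_and]
  exact ⟨fun ⟨j, _, hj⟩ => ⟨j, hj⟩, fun ⟨a, ha⟩ => ⟨a.val, ZMod.val_lt a, by simpa using ha⟩⟩

variable {R : Type*} [Ring R]

lemma ripsSum_euclCycle_eq_sum_range (f : ℝ → R) :
    ripsSum f (euclCycle n) = f (chord n (n / 2)) +
      ∑ k ∈ range (n / 2) with n - 2 * k ∣ k,
        ((n - 2 * k : ℕ) : R) * (f (chord n k) - f (chord n (k + 1))) := by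
  have hdiam : ripsSum f (euclCycle n) = ∑ A : Finset (ZMod n) with A.Nonempty,
      (-1 : R) ^ (#A + 1) * f (chord n (cyclicDiam A)) := by
    rw [euclCycle_eq_image, ripsSum_image_univ f ZMod.injective_stdAddChar]
    exact sum_congr rfl fun A hA => by rw [diam_image_stdAddChar ((mem_filter_univ _).1 hA)]
  rw [hdiam, sum_mul_apply_eq_sum_range _ (fun k => f (chord n k))
    fun A _ => cyclicDiam_le_half A, sum_nonempty_neg_one_pow_card, one_mul]
  congr 1
  rw [sum_filter]
  refine sum_congr rfl fun k hk => ?_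
  simp only [filter_filter, cyclicDiam_le_iff]
  rw [sum_isCyclicClique_neg_one_pow (by have := mem_range.1 hk; lia), ite_mul, zero_mul]

end Diameter

section Divisors

lemma chord_half_mul_div {n r : ℕ} (hn : n ≠ 0) (hr : r ∣ n) :
    chord n (r / 2 * (n / r)) = deltaE r := by
  obtain ⟨m, rfl⟩ := hr
  obtain ⟨hr, hm⟩ := mul_ne_zero_iff.1 hn
  rw [Nat.mul_div_cancel_left _ (Nat.pos_of_ne_zero hr), chord, deltaE]
  have : (m : ℝ) ≠ 0 := by exact_mod_cast hm
  push_cast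
  rw [← mul_assoc, mul_div_mul_right _ _ this]

lemma chord_half_mul_div_add_one {n r : ℕ} (hn : n ≠ 0) (hr : r ∣ n) :
    chord n (r / 2 * (n / r) + 1) = deltaE2 r n := by
  obtain ⟨m, rfl⟩ := hr
  obtain ⟨hr, hm⟩ := mul_ne_zero_iff.1 hn
  rw [Nat.mul_div_cancel_left _ (Nat.pos_of_ne_zero hr), chord, deltaE2]
  have : (m : ℝ) ≠ 0 := by exact_mod_cast hm
  push_cast
  rw [mul_div_assoc, add_comm _ (1 : ℝ), add_div, mul_div_mul_right _ _ this]

lemma sub_two_mul_half_mul_div {n r : ℕ} (hr : r ∣ n) (hodd : Odd r) :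
    n - 2 * (r / 2 * (n / r)) = n / r := by
  have hsum : 2 * (r / 2 * (n / r)) + n / r = n := by
    calc 2 * (r / 2 * (n / r)) + n / r = (2 * (r / 2) + 1) * (n / r) := by ring
      _ = n := by rw [Nat.two_mul_div_two_add_one_of_odd hodd, Nat.mul_div_cancel' hr]
  lia

lemma two_le_div_of_dvd_of_ne {n r : ℕ} (hn : n ≠ 0) (hr : r ∣ n) (hrn : r ≠ n) :
    2 ≤ n / r := by
  have hne_zero : n / r ≠ 0 :=
    (Nat.div_ne_zero_iff_of_dvd hr).2 ⟨hn, ne_zero_of_dvd_ne_zero hn hr⟩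
  have hne_one : n / r ≠ 1 := fun h => hrn (Nat.eq_of_dvd_of_div_eq_one hr h)
  lia

/-- The condition `n - 2 * k ∣ k` says that `k = r / 2 * (n / r)` for an odd divisor `r` of `n`,
namely `r = n / (n - 2 * k)`. -/
lemma sum_range_half_eq_sum_odd_divisors {M : Type*} [AddCommMonoid M] {n : ℕ} (hn : n ≠ 0)
    (F : ℕ → ℕ → M) :
    ∑ k ∈ range (n / 2) with n - 2 * k ∣ k, F (n - 2 * k) k =
      ∑ r ∈ n.divisors with Odd r ∧ r ≠ n, F (n / r) (r / 2 * (n / r)) := by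
  symm
  refine sum_nbij' (fun r => r / 2 * (n / r)) (fun k => n / (n - 2 * k)) ?_ ?_ ?_ ?_ ?_ <;>
    simp only [mem_filter, mem_range, Nat.mem_divisors]
  · rintro r ⟨⟨hr, -⟩, hodd, hrn⟩
    have hsub := sub_two_mul_half_mul_div hr hodd
    have hquot := two_le_div_of_dvd_of_ne hn hr hrn
    refine ⟨by lia, ?_⟩
    rw [hsub]
    exact Nat.dvd_mul_left _ _
  · rintro k ⟨hk, hd⟩
    have hdn := sub_two_mul_dvd_self (by lia) hd
    exact ⟨⟨Nat.div_dvd_of_dvd hdn, hn⟩, ⟨_, div_sub_two_mul (by lia) hd⟩,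
      (Nat.div_lt_self (Nat.pos_of_ne_zero hn) (by lia)).ne⟩
  · rintro r ⟨⟨hr, -⟩, hodd, -⟩
    rw [sub_two_mul_half_mul_div hr hodd, Nat.div_div_self hr hn]
  · rintro k ⟨hk, hd⟩
    rw [Nat.div_div_self (sub_two_mul_dvd_self (by lia) hd) hn,
      half_div_sub_two_mul_mul (by lia) hd]
  · rintro r ⟨⟨hr, -⟩, hodd, -⟩
    rw [sub_two_mul_half_mul_div hr hodd]

end Divisors

end CyclicClique

open CyclicClique in
theorem ripsMag_euclCycle_general {R : Type*} [Ring R] (f : ℝ → R) (n : ℕ) (hn : 1 ≤ n) :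
    ripsSum f (euclCycle n) =
      (∑ r ∈ n.divisors.filter (fun r => Odd r ∧ r ≠ n),
        ((n / r : ℕ) : R) * (f (deltaE r) - f (deltaE2 r n))) + f (deltaE n) := by
  have hn0 : n ≠ 0 := Nat.one_le_iff_ne_zero.1 hn
  have : NeZero n := ⟨hn0⟩
  rw [ripsSum_euclCycle_eq_sum_range, add_comm, chord, ← deltaE,
    sum_range_half_eq_sum_odd_divisors hn0
      fun m k => (m : R) * (f (chord n k) - f (chord n (k + 1)))]
  congr 1
  refine Finset.sum_congr rfl fun r hr => ?_
  have hrn : r ∣ n := Nat.dvd_of_mem_divisors (Finset.mem_filter.1 hr).1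
  rw [chord_half_mul_div hn0 hrn, chord_half_mul_div_add_one hn0 hrn]

/-- for `n ≥ 1` and `t > 0`,
`|tC_n^eucl|_Rips = Σ_{odd r ∣ n, r ≠ n} (n/r)(e^{−δ_r t} − e^{−δ_{r,n} t}) + e^{−δ_n t}`. -/
theorem ripsMag_euclCycle (n : ℕ) (hn : 1 ≤ n) (t : ℝ) (ht : 0 < t) :
    ripsMag (euclCycle n) t =
      (∑ r ∈ n.divisors.filter (fun r => Odd r ∧ r ≠ n),
        ((n / r : ℕ) : ℝ) * (Real.exp (-(deltaE r) * t) - Real.exp (-(deltaE2 r n) * t)))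
      + Real.exp (-(deltaE n) * t) := by
  rw [CyclicClique.ripsMag_eq_ripsSum]
  exact ripsMag_euclCycle_general (fun d => Real.exp (-d * t)) n hn
end
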